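/- Let ε ∈ [−1/2, 1/2] with ε ≠ 0. Then there exists C_ε > 0, depending only on A₂, K₂ and ε, such that for every integer N ≥ 2 (h = 1/N), every vector (ψ₀,…,ψ_{N−1}) ∈ ℂ^N with associated step function ψ_h = Σ_{i=0}^{N−1} ψ_i χ_{i+ε}, and every 1-periodic u ∈ C¹(ℝ, ℂ), one has | h² Σ_{i,j=0}^{N−1} ψ_i V₂(t_{i+ε}, t_j) u(t_j) | ≤ C_ε ‖ψ_h‖₀ ( ‖u‖₀ + h ‖u‖₁ ). -/

import Mathlib

/-!
The sampled kernel `V₂(t_{i+ε}, t_j)` defines an operator that is bounded uniformly in `N`, already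
in the Hilbert–Schmidt norm: `h² Σ_{i,j} |V₂(t_{i+ε}, t_j)|² ≤ B` (`logKer_hilbertSchmidt`). The
smooth factors are bounded, `log²(y²) ≤ 64 y^{-1/2}` on `(0, 1]`, and
`|sin(π (k + ε) / N)| ≥ |ε| min(k + 1, N - k) / N` for `0 ≤ k < N`, so each row is controlled by
`Σ_{k ≤ N} k^{-1/2} ≤ 2 √N`. Cauchy–Schwarz over pairs `(i, j)` then bounds the bilinear form by
`√B ‖ψ_h‖₀ (h Σ_j |u(t_j)|²)^{1/2}`.

It remains to bound the samples of `u`. Integrating the derivative of `|u|²` on each cell gives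
`h Σ_j |u(t_j)|² ≤ 2 ∫ |u|² + h² ∫ |u'|²` (`sample_sum`), and Parseval's identity, applied to `u`
and to `u'` with `fc u' m = 2πi m · fc u m`, turns the right side into
`2 ‖u‖₀² + 4π² h² (‖u‖₁² - |û(0)|²)`, at most `(2π (‖u‖₀ + h ‖u‖₁))²`.
-/

noncomputable section

/-- Smooth kernel data, 1-periodic in each variable. -/
def SPK (A : ℝ → ℝ → ℂ) : Prop :=
  ContDiff ℝ (⊤ : ℕ∞) (fun p : ℝ × ℝ => A p.1 p.2) ∧
    (∀ s t, A (s + 1) t = A s t) ∧ (∀ s t, A s (t + 1) = A s t)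

/-- Logarithmic kernel `V(s,t) = (i/(2π)) A(s,t) log(sin²(π(s−t))) + K(s,t)`. -/
def logKer (A K : ℝ → ℝ → ℂ) (s t : ℝ) : ℂ :=
  Complex.I / (2 * Real.pi) * A s t * (Real.log (Real.sin (Real.pi * (s - t)) ^ 2) : ℂ) + K s t

/-- Grid point `s_{j+ε} = (j − 1/2 + ε)h`. -/
def sg (h ε : ℝ) (j : ℤ) : ℝ := ((j : ℝ) - 1 / 2 + ε) * h

/-- Grid point `t_{j+ε} = (j + ε)h`. -/
def tg (h ε : ℝ) (j : ℤ) : ℝ := ((j : ℝ) + ε) * h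

/-- Integral operator with kernel `V`. -/
def Vop (V : ℝ → ℝ → ℂ) (φ : ℝ → ℂ) (s : ℝ) : ℂ := ∫ t in (0:ℝ)..1, V s t * φ t

/-- Hypersingular operator `W = −D V₁ D + V₂`. -/
def Wop (V1 V2 : ℝ → ℝ → ℂ) (φ : ℝ → ℂ) (s : ℝ) : ℂ :=
  -deriv (Vop V1 (deriv φ)) s + Vop V2 φ s

/-- Nyström matrix entries `W^ε_{ij}`. -/
def Wmat (V1 V2 : ℝ → ℝ → ℂ) (h ε : ℝ) (i j : ℤ) : ℂ :=
  V1 (sg h ε (i + 1)) (sg h 0 (j + 1)) - V1 (sg h ε i) (sg h 0 (j + 1))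
    - V1 (sg h ε (i + 1)) (sg h 0 j) + V1 (sg h ε i) (sg h 0 j)
    + (h : ℂ) ^ 2 * V2 (tg h ε i) (tg h 0 j)

/-- Fourier coefficient of a 1-periodic function. -/
def fc (u : ℝ → ℂ) (m : ℤ) : ℂ :=
  ∫ t in (0:ℝ)..1, u t * Complex.exp (-(2 * Real.pi * Complex.I * (m : ℂ) * (t : ℂ)))

/-- Periodic Sobolev norm of order `r`. -/
def sobNorm (r : ℝ) (u : ℝ → ℂ) : ℝ :=
  Real.sqrt (‖fc u 0‖ ^ 2 +
    ∑' m : ℤ, if m = 0 then 0 else |(m : ℝ)| ^ (2 * r) * ‖fc u m‖ ^ 2)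

/-- 1-periodic step function on the ε-shifted grid with coefficients `v`. -/
def stepf (N : ℕ) (ε : ℝ) (v : ZMod N → ℂ) (s : ℝ) : ℂ :=
  v ((⌊s * N + 1 / 2 - ε⌋ : ℤ) : ZMod N)

/-- Midpoint quadrature error matrix entries `E^ε_{ij}`. -/
def Emat (V2 : ℝ → ℝ → ℂ) (h ε : ℝ) (i j : ℤ) : ℂ :=
  (∫ s in (sg h ε i)..(sg h ε (i + 1)), ∫ t in (sg h 0 j)..(sg h 0 (j + 1)), V2 s t)
    - (h : ℂ) ^ 2 * V2 (tg h ε i) (tg h 0 j)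

/-- Spectral (ℓ²-operator) norm of a complex `N×N` matrix. -/
def specNorm {N : ℕ} (M : Matrix (Fin N) (Fin N) ℂ) : ℝ :=
  ‖LinearMap.toContinuousLinearMap (Matrix.toEuclideanLin M)‖

/-- The function `C̄₁(t) = −(1/(2πi)) log(4 sin²(πt))`. -/
def Cbar1 (t : ℝ) : ℂ :=
  -(1 / (2 * Real.pi * Complex.I)) * (Real.log (4 * Real.sin (Real.pi * t) ^ 2) : ℂ)

end

/-! ### Boundedness of the smooth factors -/

lemma SPK.exists_bound {A : ℝ → ℝ → ℂ} (hA : SPK A) :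
    ∃ C : ℝ, 0 ≤ C ∧ ∀ s t, ‖A s t‖ ≤ C := by
  obtain ⟨hc, h1, h2⟩ := hA
  obtain ⟨C, hC⟩ := ((isCompact_Icc (a := (0:ℝ)) (b := 1)).prod
    (isCompact_Icc (a := (0:ℝ)) (b := 1))).exists_bound_of_continuousOn hc.continuous.continuousOn
  have key : ∀ s t, ‖A s t‖ ≤ C := by
    intro s t
    have p1 : ∀ t, Function.Periodic (fun s => A s t) 1 := fun t s => h1 s t
    have p2 : ∀ s, Function.Periodic (A s) 1 := fun s t => h2 s t
    have e1 : A (Int.fract s) t = A s t := by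
      have := (p1 t).sub_int_mul_eq (x := s) ⌊s⌋
      rwa [mul_one] at this
    have e2 : A (Int.fract s) (Int.fract t) = A (Int.fract s) t := by
      have := (p2 (Int.fract s)).sub_int_mul_eq (x := t) ⌊t⌋
      rwa [mul_one] at this
    rw [← e1, ← e2]
    exact hC (Int.fract s, Int.fract t)
      ⟨⟨Int.fract_nonneg s, (Int.fract_lt_one s).le⟩, ⟨Int.fract_nonneg t, (Int.fract_lt_one t).le⟩⟩
  exact ⟨C, (norm_nonneg _).trans (key 0 0), key⟩

/-! ### The discrete `ℓ²` bound for the logarithm -/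

/-- The logarithmic singularity is weaker than `y ^ (-1/4)`, so its square is weaker than
`y ^ (-1/2)`. -/
lemma log_sq_sq_le {y : ℝ} (h0 : 0 < y) (h1 : y ≤ 1) :
    Real.log (y ^ 2) ^ 2 ≤ 64 / √y := by
  have h := Real.abs_log_mul_self_rpow_lt y (1/4) h0 h1 (by norm_num)
  have hp : 0 < y ^ (1/4 : ℝ) := Real.rpow_pos_of_pos h0 _
  have hs : (y ^ (1/4 : ℝ)) ^ 2 = √y := by
    rw [Real.sqrt_eq_rpow, ← Real.rpow_natCast, ← Real.rpow_mul h0.le]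
    norm_num
  rw [le_div_iff₀ (Real.sqrt_pos.2 h0), Real.log_pow, ← hs]
  have h2 : (Real.log y * y ^ (1/4 : ℝ)) ^ 2 ≤ 4 ^ 2 := by
    rw [← sq_abs]
    exact pow_le_pow_left₀ (abs_nonneg _) (by linarith) 2
  push_cast
  nlinarith

lemma two_mul_le_abs_sin {x y : ℝ} (hy : 0 ≤ y) (h1 : y ≤ x) (h2 : y ≤ 1 - x) :
    2 * y ≤ |Real.sin (Real.pi * x)| := by
  have hpi := Real.pi_pos
  have main : ∀ z : ℝ, 0 ≤ z → z ≤ 1 / 2 → 2 * z ≤ Real.sin (Real.pi * z) := by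
    intro z hz hz'
    have := Real.mul_le_sin (x := Real.pi * z) (by positivity) (by nlinarith)
    calc 2 * z = 2 / Real.pi * (Real.pi * z) := by field_simp
      _ ≤ _ := this
  rcases le_total x (1/2) with h | h
  · exact le_trans (by linarith) ((main x (by linarith) h).trans (le_abs_self _))
  · have := main (1 - x) (by linarith) (by linarith)
    have e : Real.sin (Real.pi * (1 - x)) = Real.sin (Real.pi * x) := by
      rw [mul_sub, mul_one, Real.sin_pi_sub]
    rw [e] at this
    exact le_trans (by linarith) (this.trans (le_abs_self _))

/-- The shifted grid stays away from the integers, at a distance comparable to that of the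
grid index to the nearest multiple of `N`; the index `k = 0` is where `ε ≠ 0` enters. -/
lemma abs_sin_grid_ge {N k : ℕ} (hk : k < N) {ε : ℝ} (hε : |ε| ≤ 1 / 2) :
    |ε| * (min ((k:ℝ) + 1) ((N:ℝ) - k) / N) ≤ |Real.sin (Real.pi * ((k + ε) / N))| := by
  have hN : (0:ℝ) < N := by exact_mod_cast (by omega : 0 < N)
  have hkN : (k:ℝ) + 1 ≤ N := by exact_mod_cast hk
  have he := abs_le.1 hε
  have ha := abs_nonneg ε
  rcases Nat.eq_zero_or_pos k with rfl | hkpos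
  · have hN1 : (1:ℝ) ≤ N := by simpa using hkN
    have hs : |Real.sin (Real.pi * ((((0:ℕ):ℝ) + ε) / N))| = |Real.sin (Real.pi * (|ε| / N))| := by
      rcases abs_cases ε with ⟨h, _⟩ | ⟨h, _⟩
      · rw [h]; simp
      · rw [h, neg_div, mul_neg, Real.sin_neg, abs_neg]; simp
    rw [hs]
    have hle : |ε| / N ≤ 1 / 2 := by
      rw [div_le_iff₀ hN]; nlinarith
    refine le_trans ?_ (two_mul_le_abs_sin (y := |ε| / N) (by positivity) le_rfl (by linarith))
    have : min (((0:ℕ):ℝ) + 1) ((N:ℝ) - (0:ℕ)) = 1 := by simp [hN1]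
    rw [this, mul_one_div]
    have : 0 ≤ |ε| / N := by positivity
    linarith
  · have hk1 : (1:ℝ) ≤ k := by exact_mod_cast hkpos
    set m := min ((k:ℝ) + 1) ((N:ℝ) - k) with hm
    have hm1 : m ≤ k + 1 := min_le_left _ _
    have hm2 : m ≤ N - k := min_le_right _ _
    have hm0 : 0 ≤ m := le_min (by linarith) (by linarith)
    have h1 : m / 4 / N ≤ (k + ε) / N := by
      gcongr; linarith
    have h2 : m / 4 / N ≤ 1 - (k + ε) / N := by
      rw [div_le_iff₀ hN, sub_mul, div_mul_cancel₀ _ hN.ne']; linarith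
    refine le_trans ?_ (two_mul_le_abs_sin (by positivity) h1 h2)
    have : 0 ≤ m / N := by positivity
    have e : 2 * (m / 4 / N) = 1 / 2 * (m / N) := by ring
    rw [e]
    gcongr

lemma sum_inv_sqrt_le (n : ℕ) :
    ∑ k ∈ Finset.range n, 1 / √((k:ℝ) + 1) ≤ 2 * √(n:ℝ) := by
  induction n with
  | zero => simp
  | succ n ih =>
    rw [Finset.sum_range_succ]
    have hb : 0 < √((n:ℝ) + 1) := Real.sqrt_pos.2 (by positivity)
    have ha : 0 ≤ √(n:ℝ) := Real.sqrt_nonneg _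
    have hb2 := Real.sq_sqrt (show (0:ℝ) ≤ (n:ℝ) + 1 by positivity)
    have ha2 := Real.sq_sqrt (show (0:ℝ) ≤ (n:ℝ) by positivity)
    have : 1 / √((n:ℝ) + 1) ≤ 2 * √((n:ℝ) + 1) - 2 * √(n:ℝ) := by
      rw [div_le_iff₀ hb]
      nlinarith [sq_nonneg (√((n:ℝ) + 1) - √(n:ℝ))]
    push_cast
    linarith

/-- Riemann sums of the squared logarithm along one row of the shifted grid are bounded uniformly
in `N`. -/
lemma sum_log_sq_le {N : ℕ} {ε : ℝ} (hε : |ε| ≤ 1 / 2) (hε0 : ε ≠ 0) :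
    ∑ k ∈ Finset.range N, Real.log (Real.sin (Real.pi * ((k + ε) / N)) ^ 2) ^ 2
      ≤ 256 / √|ε| * N := by
  have hse : 0 < √|ε| := Real.sqrt_pos.2 (abs_pos.2 hε0)
  have hterm : ∀ k ∈ Finset.range N, Real.log (Real.sin (Real.pi * ((k + ε) / N)) ^ 2) ^ 2 ≤
      64 / √|ε| * √(N:ℝ) * (1 / √((k:ℝ) + 1) + 1 / √(((N - 1 - k : ℕ) : ℝ) + 1)) := by
    intro k hk
    have hk := Finset.mem_range.1 hk
    have hN : (0:ℝ) < N := by exact_mod_cast (by omega : 0 < N)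
    have hkN : (k:ℝ) + 1 ≤ N := by exact_mod_cast hk
    have hcast : (((N - 1 - k : ℕ) : ℝ) + 1) = N - k := by
      have : ((N - 1 - k : ℕ) + 1 + k) = N := by omega
      have := congrArg (Nat.cast : ℕ → ℝ) this
      push_cast at this
      linarith
    rw [hcast]
    set m := min ((k:ℝ) + 1) ((N:ℝ) - k) with hm
    have hm0 : 0 < m := lt_min (by positivity) (by linarith)
    have hge := abs_sin_grid_ge hk hε
    rw [← hm] at hge
    have hpos : 0 < |ε| * (m / N) := mul_pos (abs_pos.2 hε0) (by positivity)
    have h64 := log_sq_sq_le (hpos.trans_le hge) (Real.abs_sin_le_one _)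
    rw [sq_abs] at h64
    have hsm : 0 < √m := Real.sqrt_pos.2 hm0
    have hsN : 0 < √(N:ℝ) := Real.sqrt_pos.2 hN
    calc _ ≤ 64 / √(|Real.sin (Real.pi * ((k + ε) / N))|) := h64
      _ ≤ 64 / √(|ε| * (m / N)) := by
          gcongr
      _ = 64 / √|ε| * √(N:ℝ) * (1 / √m) := by
          rw [Real.sqrt_mul (abs_nonneg _), Real.sqrt_div hm0.le]
          field_simp
      _ ≤ _ := by
          gcongr
          rcases min_choice ((k:ℝ) + 1) ((N:ℝ) - k) with h | h
          · rw [hm, h]; exact le_add_of_nonneg_right (by positivity)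
          · rw [hm, h]; exact le_add_of_nonneg_left (by positivity)
  refine (Finset.sum_le_sum hterm).trans ?_
  rw [← Finset.mul_sum, Finset.sum_add_distrib,
    Finset.sum_range_reflect (fun k : ℕ => 1 / √((k:ℝ) + 1)) N]
  have h := sum_inv_sqrt_le N
  have hN2 := Real.mul_self_sqrt (show (0:ℝ) ≤ (N:ℝ) by positivity)
  calc _ ≤ 64 / √|ε| * √(N:ℝ) * (2 * √(N:ℝ) + 2 * √(N:ℝ)) := by gcongr
    _ = 256 / √|ε| * (√(N:ℝ) * √(N:ℝ)) := by ring
    _ = _ := by rw [hN2]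

lemma sum_zmod_val {M : Type*} [AddCommMonoid M] (N : ℕ) [NeZero N] (f : ℕ → M) :
    ∑ i : ZMod N, f i.val = ∑ k ∈ Finset.range N, f k := by
  obtain _ | n := N
  · exact absurd rfl (NeZero.ne 0)
  · exact Fin.sum_univ_eq_sum_range f (n + 1)

/-- `sin²` of the grid difference depends only on the class of `i - j` modulo `N`. -/
lemma sin_sq_grid {N : ℕ} [NeZero N] (ε : ℝ) (i j : ZMod N) :
    Real.sin (Real.pi * (tg (1 / (N : ℝ)) ε ((i.val : ℕ) : ℤ)
        - tg (1 / (N : ℝ)) 0 ((j.val : ℕ) : ℤ))) ^ 2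
      = Real.sin (Real.pi * (((i - j).val + ε) / N)) ^ 2 := by
  have hN : (N:ℝ) ≠ 0 := Nat.cast_ne_zero.2 (NeZero.ne N)
  rcases lt_or_ge ((i - j).val + j.val) N with h | h
  · have := ZMod.val_add_of_lt h
    rw [sub_add_cancel] at this
    rw [this]
    congr 3
    simp only [tg]; push_cast; field_simp; ring
  · have := ZMod.val_add_val_of_le h
    rw [sub_add_cancel] at this
    have hc : (i.val : ℝ) = (i - j).val + j.val - N := by
      have := congrArg (Nat.cast : ℕ → ℝ) this
      push_cast at this
      linarith
    have e : Real.pi * (tg (1 / (N : ℝ)) ε ((i.val : ℕ) : ℤ)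
        - tg (1 / (N : ℝ)) 0 ((j.val : ℕ) : ℤ)) = Real.pi * (((i - j).val + ε) / N) - Real.pi := by
      simp only [tg, Int.cast_natCast, hc]; field_simp; ring
    rw [e, Real.sin_sub_pi, neg_sq]

/-- Hilbert–Schmidt bound for the sampled kernel. -/
lemma logKer_hilbertSchmidt {A K : ℝ → ℝ → ℂ} (hA : SPK A) (hK : SPK K)
    {ε : ℝ} (hε : |ε| ≤ 1 / 2) (hε0 : ε ≠ 0) :
    ∃ B : ℝ, 0 < B ∧ ∀ (N : ℕ) [NeZero N],
      ∑ i : ZMod N, ∑ j : ZMod N, ‖logKer A K (tg (1 / (N : ℝ)) ε ((i.val : ℕ) : ℤ))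
        (tg (1 / (N : ℝ)) 0 ((j.val : ℕ) : ℤ))‖ ^ 2 ≤ B * (N:ℝ) ^ 2 := by
  obtain ⟨a, ha0, ha⟩ := hA.exists_bound
  obtain ⟨b, hb0, hb⟩ := hK.exists_bound
  refine ⟨2 * a ^ 2 * (256 / √|ε|) + 2 * b ^ 2 + 1, by positivity, fun N _ => ?_⟩
  set L : ZMod N → ℝ := fun d => Real.log (Real.sin (Real.pi * ((d.val + ε) / N)) ^ 2) with hL
  have hterm : ∀ i j : ZMod N, ‖logKer A K (tg (1 / (N : ℝ)) ε ((i.val : ℕ) : ℤ))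
      (tg (1 / (N : ℝ)) 0 ((j.val : ℕ) : ℤ))‖ ^ 2 ≤ 2 * a ^ 2 * L (i - j) ^ 2 + 2 * b ^ 2 := by
    intro i j
    rw [logKer, sin_sq_grid ε i j]
    set s := tg (1 / (N : ℝ)) ε ((i.val : ℕ) : ℤ)
    set t := tg (1 / (N : ℝ)) 0 ((j.val : ℕ) : ℤ)
    have hI : ‖Complex.I / (2 * (Real.pi : ℂ))‖ ≤ 1 := by
      rw [norm_div, Complex.norm_I, norm_mul, Complex.norm_real, Real.norm_eq_abs,
        abs_of_pos Real.pi_pos]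
      rw [div_le_one (by norm_num [Real.pi_pos])]
      norm_num
      linarith [Real.pi_gt_three]
    have h1 : ‖Complex.I / (2 * (Real.pi : ℂ)) * A s t * (L (i - j) : ℂ) + K s t‖
        ≤ a * |L (i - j)| + b := by
      refine (norm_add_le _ _).trans (add_le_add ?_ (hb s t))
      rw [norm_mul, norm_mul, Complex.norm_real, Real.norm_eq_abs]
      calc _ ≤ 1 * a * |L (i - j)| := by gcongr; exact ha s t
        _ = _ := by ring
    calc _ ≤ (a * |L (i - j)| + b) ^ 2 := pow_le_pow_left₀ (norm_nonneg _) h1 2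
      _ ≤ 2 * a ^ 2 * |L (i - j)| ^ 2 + 2 * b ^ 2 := by
          nlinarith [sq_nonneg (a * |L (i - j)| - b)]
      _ = _ := by rw [sq_abs]
  have hrow : ∀ i : ZMod N, ∑ j : ZMod N, L (i - j) ^ 2 ≤ 256 / √|ε| * N := by
    intro i
    refine ((Equiv.subLeft i).sum_comp (fun d => L d ^ 2)).trans_le ?_
    exact (sum_zmod_val N (fun k : ℕ =>
      Real.log (Real.sin (Real.pi * ((k + ε) / N)) ^ 2) ^ 2)).trans_le (sum_log_sq_le hε hε0)
  calc _ ≤ ∑ i : ZMod N, ∑ j : ZMod N, (2 * a ^ 2 * L (i - j) ^ 2 + 2 * b ^ 2) :=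
        Finset.sum_le_sum fun i _ => Finset.sum_le_sum fun j _ => hterm i j
    _ ≤ ∑ i : ZMod N, (2 * a ^ 2 * (256 / √|ε| * N) + N * (2 * b ^ 2)) := by
        refine Finset.sum_le_sum fun i _ => ?_
        rw [Finset.sum_add_distrib, ← Finset.mul_sum]
        simp only [Finset.sum_const, Finset.card_univ, ZMod.card, nsmul_eq_mul]
        gcongr
        exact hrow i
    _ = (2 * a ^ 2 * (256 / √|ε|) + 2 * b ^ 2) * (N:ℝ) ^ 2 := by
        simp only [Finset.sum_const, Finset.card_univ, ZMod.card, nsmul_eq_mul]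
        ring
    _ ≤ _ := mul_le_mul_of_nonneg_right (by linarith) (by positivity)

/-! ### Sampling a periodic function -/

/-- One cell of the sampling inequality. It follows from
`‖u a‖² ≤ ‖u t‖² + ∫ 2 ‖u‖ ‖u'‖` and `2 ‖u‖ ‖u'‖ ≤ ‖u‖² / h + h ‖u'‖²`, averaged over `t`. -/
lemma sample_cell {u : ℝ → ℂ} (hu : ContDiff ℝ 1 u) (a : ℝ) {h : ℝ} (hh : 0 < h) :
    h * ‖u a‖ ^ 2 ≤
      ∫ t in a..(a + h), (2 * ‖u t‖ ^ 2 + h ^ 2 * ‖deriv u t‖ ^ 2) := by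
  have hcu : Continuous u := hu.continuous
  have hcd : Continuous (deriv u) := hu.continuous_deriv le_rfl
  set g : ℝ → ℝ := fun t => ‖u t‖ ^ 2 / h + h * ‖deriv u t‖ ^ 2 with hg
  have hcg : Continuous g := by fun_prop
  have hg0 : ∀ t, 0 ≤ g t := fun t => by positivity
  have hd : ∀ x, HasDerivAt (fun t => ‖u t‖ ^ 2) (2 * inner ℝ (u x) (deriv u x)) x := fun x =>
    (hu.differentiable one_ne_zero x).hasDerivAt.norm_sq
  have hcd' : Continuous fun x => 2 * inner ℝ (u x) (deriv u x) := by fun_prop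
  have key : ∀ t ∈ Set.Icc a (a + h),
      ‖u a‖ ^ 2 ≤ ‖u t‖ ^ 2 + ∫ x in a..(a + h), g x := by
    intro t ht
    have ftc := intervalIntegral.integral_eq_sub_of_hasDerivAt (a := a) (b := t)
      (fun x _ => hd x) (hcd'.intervalIntegrable _ _)
    have h1 : -(∫ x in a..t, 2 * inner ℝ (u x) (deriv u x)) ≤ ∫ x in a..t, g x := by
      rw [← intervalIntegral.integral_neg]
      refine intervalIntegral.integral_mono_on ht.1 (hcd'.neg.intervalIntegrable _ _)
        (hcg.intervalIntegrable _ _) fun x _ => ?_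
      have hin := neg_le_of_abs_le (abs_real_inner_le_norm (u x) (deriv u x))
      have hsq : 2 * (‖u x‖ * ‖deriv u x‖) ≤ g x := by
        have e : g x - 2 * (‖u x‖ * ‖deriv u x‖) = (‖u x‖ - h * ‖deriv u x‖) ^ 2 / h := by
          simp only [hg]; field_simp; ring
        have : 0 ≤ (‖u x‖ - h * ‖deriv u x‖) ^ 2 / h := by positivity
        linarith
      linarith
    have h2 : ∫ x in a..t, g x ≤ ∫ x in a..(a + h), g x :=
      intervalIntegral.integral_mono_interval le_rfl ht.1 ht.2
        (Filter.Eventually.of_forall hg0) (hcg.intervalIntegrable _ _)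
    linarith
  have hint := intervalIntegral.integral_mono_on (μ := MeasureTheory.volume)
    (a := a) (b := a + h) (by linarith)
    (continuous_const.intervalIntegrable _ _)
    ((by fun_prop : Continuous fun t => ‖u t‖ ^ 2 + ∫ x in a..(a + h), g x).intervalIntegrable _ _)
    key
  rw [intervalIntegral.integral_const, add_sub_cancel_left, smul_eq_mul] at hint
  refine hint.trans_eq ?_
  rw [intervalIntegral.integral_add ((by fun_prop : Continuous _).intervalIntegrable _ _)
    (continuous_const.intervalIntegrable _ _), intervalIntegral.integral_const,
    add_sub_cancel_left, smul_eq_mul, ← intervalIntegral.integral_const_mul,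
    ← intervalIntegral.integral_add ((by fun_prop : Continuous _).intervalIntegrable _ _)
      ((by fun_prop : Continuous _).intervalIntegrable _ _)]
  refine intervalIntegral.integral_congr fun x _ => ?_
  simp only [hg]; field_simp; ring

lemma sample_sum {u : ℝ → ℂ} (hu : ContDiff ℝ 1 u) (N : ℕ) [NeZero N] :
    (1 / (N:ℝ)) * ∑ j : ZMod N, ‖u (tg (1 / (N : ℝ)) 0 ((j.val : ℕ) : ℤ))‖ ^ 2 ≤
      2 * (∫ t in (0:ℝ)..1, ‖u t‖ ^ 2) + (1 / (N:ℝ)) ^ 2 * ∫ t in (0:ℝ)..1, ‖deriv u t‖ ^ 2 := by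
  have hN : (0:ℝ) < N := Nat.cast_pos.2 (NeZero.pos N)
  have hcu : Continuous u := hu.continuous
  have hcd : Continuous (deriv u) := hu.continuous_deriv le_rfl
  have hc : Continuous fun t => 2 * ‖u t‖ ^ 2 + (1 / (N:ℝ)) ^ 2 * ‖deriv u t‖ ^ 2 := by fun_prop
  rw [sum_zmod_val N (fun k : ℕ => ‖u (tg (1 / (N : ℝ)) 0 (k : ℤ))‖ ^ 2), Finset.mul_sum]
  have hadj := intervalIntegral.sum_integral_adjacent_intervals (μ := MeasureTheory.volume)
    (a := fun k : ℕ => tg (1 / (N : ℝ)) 0 (k : ℤ)) (n := N)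
    (fun k _ => hc.intervalIntegrable _ _)
  have e0 : tg (1 / (N : ℝ)) 0 ((0 : ℕ) : ℤ) = 0 := by simp [tg]
  have e1 : tg (1 / (N : ℝ)) 0 ((N : ℕ) : ℤ) = 1 := by simp [tg, hN.ne']
  rw [e0, e1] at hadj
  rw [← intervalIntegral.integral_const_mul, ← intervalIntegral.integral_const_mul,
    ← intervalIntegral.integral_add ((by fun_prop : Continuous _).intervalIntegrable _ _)
      ((by fun_prop : Continuous _).intervalIntegrable _ _), ← hadj]
  refine Finset.sum_le_sum fun k _ => ?_
  have e : tg (1 / (N : ℝ)) 0 ((k + 1 : ℕ) : ℤ) = tg (1 / (N : ℝ)) 0 (k : ℤ) + 1 / N := by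
    simp only [tg]; push_cast; ring
  rw [e]
  exact sample_cell hu _ (by positivity)

/-! ### Parseval and the Sobolev norms -/

lemma fc_eq_fourierCoeffOn (u : ℝ → ℂ) (m : ℤ) :
    fc u m = fourierCoeffOn (zero_lt_one' ℝ) u m := by
  rw [fourierCoeffOn_eq_integral, fc]
  simp only [sub_zero, div_one, one_smul]
  refine intervalIntegral.integral_congr fun x _ => ?_
  simp only [smul_eq_mul]
  rw [fourier_coe_apply, mul_comm]
  congr 2
  push_cast
  ring

lemma hasSum_fc {u : ℝ → ℂ} (hu : Continuous u) :
    HasSum (fun m => ‖fc u m‖ ^ 2) (∫ t in (0:ℝ)..1, ‖u t‖ ^ 2) := by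
  obtain ⟨C, hC⟩ := (isCompact_Icc (a := (0:ℝ)) (b := 1)).exists_bound_of_continuousOn
    hu.continuousOn
  have hL : MeasureTheory.MemLp u 2 (MeasureTheory.volume.restrict (Set.Ioc (0:ℝ) 1)) :=
    MeasureTheory.MemLp.of_bound hu.aestronglyMeasurable C
      (MeasureTheory.ae_restrict_of_forall_mem measurableSet_Ioc fun x hx =>
        hC x (Set.Ioc_subset_Icc_self hx))
  simpa [fc_eq_fourierCoeffOn] using hasSum_sq_fourierCoeffOn (zero_lt_one' ℝ) hL

lemma sobNorm_zero_sq {u : ℝ → ℂ} (hu : Continuous u) :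
    sobNorm 0 u ^ 2 = ∫ t in (0:ℝ)..1, ‖u t‖ ^ 2 := by
  have h := hasSum_fc hu
  rw [sobNorm, Real.sq_sqrt]
  · rw [← h.tsum_eq, h.summable.tsum_eq_add_tsum_ite 0]
    simp
  · exact add_nonneg (by positivity) (tsum_nonneg fun m => by split_ifs <;> positivity)

lemma fc_deriv {u : ℝ → ℂ} (hu : ContDiff ℝ 1 u) (hp : Function.Periodic u 1) (m : ℤ) :
    fc (deriv u) m = 2 * Real.pi * Complex.I * m * fc u m := by
  have hcd : Continuous (deriv u) := hu.continuous_deriv le_rfl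
  have hd : ∀ x, HasDerivAt u (deriv u x) x := fun x =>
    (hu.differentiable one_ne_zero x).hasDerivAt
  have h01 : u 1 = u 0 := by simpa using hp 0
  rcases eq_or_ne m 0 with rfl | hm
  · have := intervalIntegral.integral_eq_sub_of_hasDerivAt (a := 0) (b := 1)
      (fun x _ => hd x) (hcd.intervalIntegrable _ _)
    simp [fc, this, h01]
  · have h := fourierCoeffOn_of_hasDerivAt (zero_lt_one' ℝ) hm (fun x _ => hd x)
      (hcd.intervalIntegrable _ _)
    rw [← fc_eq_fourierCoeffOn, ← fc_eq_fourierCoeffOn, h01] at h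
    have hm' : (m:ℂ) ≠ 0 := Int.cast_ne_zero.2 hm
    have hpi : (Real.pi : ℂ) ≠ 0 := Complex.ofReal_ne_zero.2 Real.pi_ne_zero
    rw [h]
    field_simp
    simp

lemma integral_deriv_sq {u : ℝ → ℂ} (hu : ContDiff ℝ 1 u) (hp : Function.Periodic u 1) :
    ∫ t in (0:ℝ)..1, ‖deriv u t‖ ^ 2 ≤ (2 * Real.pi) ^ 2 * sobNorm 1 u ^ 2 := by
  have h := hasSum_fc (hu.continuous_deriv le_rfl)
  have hterm : ∀ m : ℤ, ‖fc (deriv u) m‖ ^ 2 = (2 * Real.pi) ^ 2 *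
      (if m = 0 then 0 else |(m : ℝ)| ^ (2 * (1:ℝ)) * ‖fc u m‖ ^ 2) := by
    intro m
    rw [fc_deriv hu hp]
    split_ifs with hm
    · simp [hm]
    · have : |(m : ℝ)| ^ (2 * (1:ℝ)) = |(m:ℝ)| ^ 2 := by
        rw [mul_one]; exact_mod_cast Real.rpow_natCast |(m:ℝ)| 2
      rw [this]
      simp only [norm_mul, Complex.norm_I, Complex.norm_real, Real.norm_eq_abs,
        abs_of_pos Real.pi_pos, Complex.norm_intCast, Complex.norm_ofNat]
      ring
  rw [← h.tsum_eq, tsum_congr hterm, tsum_mul_left]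
  gcongr
  rw [sobNorm, Real.sq_sqrt]
  · exact le_add_of_nonneg_left (by positivity)
  · exact add_nonneg (by positivity) (tsum_nonneg fun m => by split_ifs <;> positivity)

lemma sobNorm_nonneg (r : ℝ) (u : ℝ → ℂ) : 0 ≤ sobNorm r u := Real.sqrt_nonneg _

/-- discrete bilinear bound
`|h² Σ_{i,j} ψ_i V₂(t_{i+ε}, t_j) u(t_j)| ≤ C_ε ‖ψ_h‖₀ (‖u‖₀ + h ‖u‖₁)`. -/
theorem stmt_11
    (A2 K2 : ℝ → ℝ → ℂ) (hA2 : SPK A2) (hK2 : SPK K2)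
    (ε : ℝ) (hε1 : ε ∈ Set.Icc (-(1:ℝ)/2) (1/2)) (hε0 : ε ≠ 0) :
    ∃ C > (0:ℝ), ∀ (N : ℕ) [NeZero N], 2 ≤ N → ∀ ψ : ZMod N → ℂ,
      ∀ u : ℝ → ℂ, ContDiff ℝ 1 u → Function.Periodic u 1 →
        ‖(1 / (N : ℂ)) ^ 2 * ∑ i : ZMod N, ∑ j : ZMod N,
            ψ i * logKer A2 K2 (tg (1 / (N : ℝ)) ε ((i.val : ℕ) : ℤ))
                (tg (1 / (N : ℝ)) 0 ((j.val : ℕ) : ℤ))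
              * u (tg (1 / (N : ℝ)) 0 ((j.val : ℕ) : ℤ))‖ ≤
          C * Real.sqrt ((1 / (N : ℝ)) * ∑ i : ZMod N, ‖ψ i‖ ^ 2)
            * (sobNorm 0 u + (1 / (N : ℝ)) * sobNorm 1 u) := by
  have hε : |ε| ≤ 1 / 2 := abs_le.2 ⟨by linarith [hε1.1], hε1.2⟩
  obtain ⟨B, hB, hHS⟩ := logKer_hilbertSchmidt hA2 hK2 hε hε0
  have hpi := Real.pi_gt_three
  refine ⟨√B * (2 * Real.pi), by positivity, fun N _ _ ψ u hu hp => ?_⟩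
  have hN : (0:ℝ) < N := Nat.cast_pos.2 (NeZero.pos N)
  set V : ZMod N → ZMod N → ℂ := fun i j => logKer A2 K2 (tg (1 / (N : ℝ)) ε ((i.val : ℕ) : ℤ))
    (tg (1 / (N : ℝ)) 0 ((j.val : ℕ) : ℤ)) with hV
  set w : ZMod N → ℂ := fun j => u (tg (1 / (N : ℝ)) 0 ((j.val : ℕ) : ℤ)) with hw
  change ‖(1 / (N : ℂ)) ^ 2 * ∑ i, ∑ j, ψ i * V i j * w j‖ ≤ _
  set S0 := sobNorm 0 u
  set S1 := sobNorm 1 u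
  have hS0 : 0 ≤ S0 := sobNorm_nonneg _ _
  have hS1 : 0 ≤ S1 := sobNorm_nonneg _ _
  set P := (1 / (N : ℝ)) * ∑ i, ‖ψ i‖ ^ 2 with hP
  have hP0 : 0 ≤ P := by positivity
  set Q := (1 / (N : ℝ)) * ∑ j, ‖w j‖ ^ 2 with hQ
  have hsample : Q ≤ (2 * Real.pi * (S0 + 1 / N * S1)) ^ 2 := by
    have h1 : Q ≤ 2 * S0 ^ 2 + (1 / (N:ℝ)) ^ 2 * ((2 * Real.pi) ^ 2 * S1 ^ 2) := by
      refine (sample_sum hu N).trans ?_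
      rw [← sobNorm_zero_sq hu.continuous]
      gcongr
      exact integral_deriv_sq hu hp
    have h2 : 2 * S0 ^ 2 ≤ (2 * Real.pi) ^ 2 * S0 ^ 2 := by gcongr; nlinarith
    have h3 : 0 ≤ (2 * Real.pi) ^ 2 * (2 * (S0 * (1 / N * S1))) := by positivity
    calc Q ≤ _ := h1
      _ ≤ (2 * Real.pi) ^ 2 * S0 ^ 2 + (1 / (N:ℝ)) ^ 2 * ((2 * Real.pi) ^ 2 * S1 ^ 2)
          + (2 * Real.pi) ^ 2 * (2 * (S0 * (1 / N * S1))) := by linarith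
      _ = _ := by ring
  -- Cauchy–Schwarz over pairs `(i, j)`
  have hCS : (∑ i, ∑ j, ‖V i j‖ * (‖ψ i‖ * ‖w j‖)) ^ 2 ≤
      (B * (N:ℝ) ^ 2) * ((∑ i, ‖ψ i‖ ^ 2) * ∑ j, ‖w j‖ ^ 2) := by
    have h := Finset.sum_mul_sq_le_sq_mul_sq (Finset.univ : Finset (ZMod N × ZMod N))
      (fun p => ‖V p.1 p.2‖) (fun p => ‖ψ p.1‖ * ‖w p.2‖)
    simp only [Fintype.sum_prod_type, mul_pow] at h
    rw [← Finset.sum_mul_sum] at h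
    exact h.trans (mul_le_mul_of_nonneg_right (hHS N) (by positivity))
  have hnorm : ‖(1 / (N : ℂ)) ^ 2 * ∑ i, ∑ j, ψ i * V i j * w j‖ ≤
      (1 / (N:ℝ)) ^ 2 * ∑ i, ∑ j, ‖V i j‖ * (‖ψ i‖ * ‖w j‖) := by
    rw [norm_mul, norm_pow, norm_div, norm_one, Complex.norm_natCast]
    gcongr
    refine (norm_sum_le _ _).trans (Finset.sum_le_sum fun i _ =>
      (norm_sum_le _ _).trans (Finset.sum_le_sum fun j _ => ?_))
    rw [norm_mul, norm_mul]
    exact le_of_eq (by ring)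
  refine hnorm.trans (abs_le_of_sq_le_sq' ?_ (by positivity)).2
  calc _ = (1 / (N:ℝ)) ^ 4 * (∑ i, ∑ j, ‖V i j‖ * (‖ψ i‖ * ‖w j‖)) ^ 2 := by ring
    _ ≤ (1 / (N:ℝ)) ^ 4 * ((B * (N:ℝ) ^ 2) * ((∑ i, ‖ψ i‖ ^ 2) * ∑ j, ‖w j‖ ^ 2)) := by gcongr
    _ = B * P * Q := by rw [hP, hQ]; field_simp
    _ ≤ B * P * (2 * Real.pi * (S0 + 1 / N * S1)) ^ 2 := by gcongr
    _ = _ := by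
      have e1 := Real.sq_sqrt hB.le
      have e2 := Real.sq_sqrt hP0
      nth_rewrite 1 [← e1, ← e2]
      ring
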